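/- Let Q := y_1·κ_{g_1} + … + y_s·κ_{g_s} with y_1,…,y_s ∈ ℝ (meaning Q(X,Y) = Σ_i y_i·κ_{g_i}(X_i,Y_i)), and define the alternating 3-form Q̄ on g by Q̄(X,Y,Z) := Q([X,Y],Z). Then d̂Q̄ = 0, and g(Q̄, d̂α) = 0 for every alternating 2-form α on g if and only if, for every index i with y_i ≠ 0 and all γ,δ with x^i_γ ≠ x^i_δ, one has Σ_{α,β} c_{iα,iβ}^{iγ}·c_{iα,iβ}^{iδ}/(x^i_α·x^i_β) = 0. In particular, Q̄ is harmonic with respect to any bi-invariant metric (take all x^i_α within each g_i equal). -/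

import Mathlib

/-!
Both `gb` and `Q` are weighted sums of the Killing forms of the ideals, hence symmetric and
ad-invariant (`weightedForm_symm`, `weightedForm_lie`).  For such a form closedness of
`(X, Y, Z) ↦ Q([X, Y], Z)` is the Jacobi identity, after `Q([[X, Y], Z], W) = Q([X, Y], [Z, W])`.

For the second claim put `C p q r = gb([E p, E q], E r)` and `w p = -y_i / z_i` for `p` in the block
`i`.  Then `C` is totally antisymmetric, vanishes unless all three indices lie in the same block,
and `Q̄(E p, E q, E r) = w r * C p q r`.  Expanding brackets in the orthonormal basis, the three
terms of the differential contribute equally, and the pairing of `Q̄` with `d̂α` becomes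
`-3 ∑ (w r / x r) M r t α(E t, E r)`, where `M r t = ∑ C p q r C p q t / (x p x q)` is symmetric.
Since `α` is antisymmetric, only the antisymmetric part `(w r / x r - w t / x t) M r t` of the
coefficient matters (`pairing_eq`).  Testing against the elementary 2-forms shows that the pairing
vanishes for all `α` iff all these numbers vanish; as `M` is block diagonal and `w` is constant on
blocks, this is the condition on structure constants.  The third claim is the case where that
condition is vacuous.
-/

open scoped BigOperators

section WeightedForm

variable {L : Type} [LieRing L] [LieAlgebra ℝ L] {s : ℕ} {K : Fin s → LieSubalgebra ℝ L}
  {π : Fin s → (L →ₗ[ℝ] L)}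

/-- The weighted sum `∑ i, f i * κ_{K i}(π i X, π i Y)` of the Killing forms of the `K i`. -/
noncomputable def weightedForm (hπmem : ∀ i X, π i X ∈ K i) (f : Fin s → ℝ) (X Y : L) : ℝ :=
  ∑ i, f i * killingForm ℝ ↥(K i) ⟨π i X, hπmem i X⟩ ⟨π i Y, hπmem i Y⟩

theorem weightedForm_symm (hπmem : ∀ i X, π i X ∈ K i) (f : Fin s → ℝ) (X Y : L) :
    weightedForm hπmem f X Y = weightedForm hπmem f Y X := by
  unfold weightedForm
  refine Finset.sum_congr rfl fun i _ => ?_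
  rw [LieModule.traceForm_comm]

theorem weightedForm_add_right (hπmem : ∀ i X, π i X ∈ K i) (f : Fin s → ℝ) (X Y Z : L) :
    weightedForm hπmem f X (Y + Z) = weightedForm hπmem f X Y + weightedForm hπmem f X Z := by
  unfold weightedForm
  rw [← Finset.sum_add_distrib]
  refine Finset.sum_congr rfl fun i _ => ?_
  have h : (⟨π i (Y + Z), hπmem i (Y + Z)⟩ : K i)
      = ⟨π i Y, hπmem i Y⟩ + ⟨π i Z, hπmem i Z⟩ := Subtype.ext (map_add _ _ _)
  rw [h, map_add, mul_add]

/-- Elements of distinct ideals commute, since their bracket lies in both. -/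
theorem lie_eq_zero_of_ne
    (hKideal : ∀ (i : Fin s) (X Y : L), Y ∈ K i → ⁅X, Y⁆ ∈ K i)
    (hπid : ∀ i X, X ∈ K i → π i X = X)
    (hπzero : ∀ i j, i ≠ j → ∀ X, X ∈ K i → π j X = 0)
    {i j : Fin s} (hij : i ≠ j) {X Y : L} (hX : X ∈ K i) (hY : Y ∈ K j) : ⁅X, Y⁆ = 0 := by
  have h1 : ⁅X, Y⁆ ∈ K j := hKideal j X Y hY
  have h2 : ⁅X, Y⁆ ∈ K i := by
    rw [← lie_skew]
    exact (K i).neg_mem (hKideal i Y X hX)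
  rw [← hπid j _ h1, hπzero i j hij _ h2]

theorem proj_lie
    (hKideal : ∀ (i : Fin s) (X Y : L), Y ∈ K i → ⁅X, Y⁆ ∈ K i)
    (hπmem : ∀ i X, π i X ∈ K i)
    (hπsum : ∀ X : L, ∑ i, π i X = X)
    (hπid : ∀ i X, X ∈ K i → π i X = X)
    (hπzero : ∀ i j, i ≠ j → ∀ X, X ∈ K i → π j X = 0)
    (i : Fin s) (X Y : L) : π i ⁅X, Y⁆ = ⁅π i X, π i Y⁆ := by
  have h : ⁅X, Y⁆ = ∑ j, ⁅π j X, π j Y⁆ := by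
    conv_lhs => rw [← hπsum X, ← hπsum Y]
    simp only [sum_lie, lie_sum]
    refine Finset.sum_congr rfl fun j _ => ?_
    refine Finset.sum_eq_single j (fun k _ hk => ?_) (by simp)
    exact lie_eq_zero_of_ne hKideal hπid hπzero hk (hπmem _ _) (hπmem _ _)
  have hm : ∀ j, ⁅π j X, π j Y⁆ ∈ K j := fun j => hKideal j _ _ (hπmem _ _)
  rw [h, map_sum, Finset.sum_eq_single i, hπid i _ (hm i)]
  · intro j _ hj
    exact hπzero j i hj _ (hm j)
  · simp

theorem weightedForm_lie
    (hKideal : ∀ (i : Fin s) (X Y : L), Y ∈ K i → ⁅X, Y⁆ ∈ K i)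
    (hπmem : ∀ i X, π i X ∈ K i)
    (hπsum : ∀ X : L, ∑ i, π i X = X)
    (hπid : ∀ i X, X ∈ K i → π i X = X)
    (hπzero : ∀ i j, i ≠ j → ∀ X, X ∈ K i → π j X = 0)
    (f : Fin s → ℝ) (X Y Z : L) :
    weightedForm hπmem f ⁅X, Y⁆ Z = weightedForm hπmem f X ⁅Y, Z⁆ := by
  unfold weightedForm
  refine Finset.sum_congr rfl fun i _ => ?_
  have h : ∀ U V : L, (⟨π i ⁅U, V⁆, hπmem i ⁅U, V⁆⟩ : K i)
      = ⁅(⟨π i U, hπmem i U⟩ : K i), (⟨π i V, hπmem i V⟩ : K i)⁆ := fun U V =>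
    Subtype.ext (proj_lie hKideal hπmem hπsum hπid hπzero i U V)
  rw [h, h, LieModule.traceForm_apply_lie_apply]

/-- Against a vector of a single ideal only one Killing form contributes. -/
theorem weightedForm_of_mem (hπmem : ∀ i X, π i X ∈ K i)
    (hπzero : ∀ i j, i ≠ j → ∀ X, X ∈ K i → π j X = 0)
    (f : Fin s → ℝ) (i : Fin s) (X Y : L) (hY : Y ∈ K i) :
    weightedForm hπmem f X Y
      = f i * killingForm ℝ ↥(K i) ⟨π i X, hπmem i X⟩ ⟨π i Y, hπmem i Y⟩ := by
  unfold weightedForm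
  refine Finset.sum_eq_single i (fun j _ hj => ?_) (by simp)
  have h : (⟨π j Y, hπmem j Y⟩ : K j) = 0 := Subtype.ext (hπzero i j (Ne.symm hj) Y hY)
  rw [h, map_zero, mul_zero]

end WeightedForm

/-- The 3-form `(X, Y, Z) ↦ B([X, Y], Z)` of a symmetric ad-invariant form `B` is closed. -/
theorem closed_of_invariant {L : Type} [LieRing L] (B : L → L → ℝ) (hs : ∀ X Y, B X Y = B Y X)
    (hadd : ∀ X Y Z, B X (Y + Z) = B X Y + B X Z)
    (hinv : ∀ X Y Z, B ⁅X, Y⁆ Z = B X ⁅Y, Z⁆) (X₁ X₂ X₃ X₄ : L) :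
    - B ⁅⁅X₁, X₂⁆, X₃⁆ X₄ + B ⁅⁅X₁, X₃⁆, X₂⁆ X₄ - B ⁅⁅X₁, X₄⁆, X₂⁆ X₃
        - B ⁅⁅X₂, X₃⁆, X₁⁆ X₄ + B ⁅⁅X₂, X₄⁆, X₁⁆ X₃ - B ⁅⁅X₃, X₄⁆, X₁⁆ X₂ = 0 := by
  have h1 := hinv ⁅X₁, X₂⁆ X₃ X₄
  have h2 := hinv ⁅X₁, X₃⁆ X₂ X₄
  have h3 := hinv ⁅X₁, X₄⁆ X₂ X₃
  have h4 := (hinv ⁅X₂, X₃⁆ X₁ X₄).trans (hs _ _)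
  have h5 := (hinv ⁅X₂, X₄⁆ X₁ X₃).trans (hs _ _)
  have h6 := (hinv ⁅X₃, X₄⁆ X₁ X₂).trans (hs _ _)
  have j : ⁅X₃, ⁅X₂, X₄⁆⁆ = ⁅X₂, ⁅X₃, X₄⁆⁆ + ⁅X₄, ⁅X₂, X₃⁆⁆ := by
    rw [leibniz_lie X₃ X₂ X₄, ← lie_skew ⁅X₃, X₂⁆ X₄, ← lie_skew X₃ X₂, lie_neg, neg_neg,
      add_comm]
  have j' := congrArg (B X₁) j
  rw [hadd, ← hinv X₁ X₃, ← hinv X₁ X₂, ← hinv X₁ X₄] at j'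
  linarith

/-- Pairing a totally antisymmetric `T` with the three terms of the differential: each of them
contributes the same amount. -/
theorem pairing_three {ι : Type} [Fintype ι] (T B : ι → ι → ι → ℝ)
    (h12 : ∀ p q r, T q p r = - T p q r) (h23 : ∀ p q r, T p r q = - T p q r) :
    ∑ p, ∑ q, ∑ r, T p q r * (- B p q r + B p r q - B q r p)
      = -3 * ∑ p, ∑ q, ∑ r, T p q r * B p q r := by
  have e1 : ∑ p, ∑ q, ∑ r, T p q r * B p r q = - ∑ p, ∑ q, ∑ r, T p q r * B p q r := by
    rw [← Finset.sum_neg_distrib]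
    refine Finset.sum_congr rfl fun p _ => ?_
    rw [Finset.sum_comm, ← Finset.sum_neg_distrib]
    refine Finset.sum_congr rfl fun q _ => ?_
    rw [← Finset.sum_neg_distrib]
    refine Finset.sum_congr rfl fun r _ => ?_
    rw [h23 p q r]
    ring
  have e2 : ∑ p, ∑ q, ∑ r, T p q r * B q r p = ∑ p, ∑ q, ∑ r, T p q r * B p q r := by
    rw [Finset.sum_comm]
    refine Finset.sum_congr rfl fun p _ => ?_
    rw [Finset.sum_comm]
    refine Finset.sum_congr rfl fun q _ => Finset.sum_congr rfl fun r _ => ?_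
    rw [h12 p r q, h23 p q r, neg_neg]
  have e3 : ∑ p, ∑ q, ∑ r, T p q r * (- B p q r + B p r q - B q r p)
      = - ∑ p, ∑ q, ∑ r, T p q r * B p q r + ∑ p, ∑ q, ∑ r, T p q r * B p r q
        - ∑ p, ∑ q, ∑ r, T p q r * B q r p := by
    simp only [← Finset.sum_neg_distrib, ← Finset.sum_add_distrib, ← Finset.sum_sub_distrib]
    refine Finset.sum_congr rfl fun p _ => Finset.sum_congr rfl fun q _ =>
      Finset.sum_congr rfl fun r _ => ?_
    ring
  rw [e3, e1, e2]
  ring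

/-- The pairing of the 3-form `w r * C p q r` with the differential of the 2-form `A`, written
through the antisymmetric part of `(w r / x r) * M r t`, where
`M r t = ∑ C p q r * C p q t / (x p * x q)`. -/
theorem pairing_eq {ι : Type} [Fintype ι] (C : ι → ι → ι → ℝ) (w x : ι → ℝ) (A : ι → ι → ℝ)
    (h12 : ∀ p q r, C q p r = - C p q r) (h23 : ∀ p q r, C p r q = - C p q r)
    (hw : ∀ p q r, w q * C p q r = w r * C p q r)
    (hA : ∀ t r, A r t = - A t r) :
    ∑ p, ∑ q, ∑ r, (w r * C p q r) * (- (∑ t, C p q t * A t r) + (∑ t, C p r t * A t q)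
        - (∑ t, C q r t * A t p)) / (x p * x q * x r)
      = -(3 / 2) * ∑ r, ∑ t, (w r / x r - w t / x t)
          * (∑ p, ∑ q, C p q r * C p q t / (x p * x q)) * A t r := by
  have h := pairing_three (fun p q r => w r * C p q r / (x p * x q * x r))
    (fun p q r => ∑ t, C p q t * A t r)
    (fun p q r => by rw [h12 p q r, mul_comm (x q) (x p)]; ring)
    (fun p q r => by
      have := hw p q r
      rw [h23 p q r, mul_right_comm (x p) (x r) (x q), ← neg_div, mul_neg, this])
  have e0 : ∑ p, ∑ q, ∑ r, (w r * C p q r / (x p * x q * x r)) * ∑ t, C p q t * A t r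
      = ∑ r, ∑ t, (w r / x r) * (∑ p, ∑ q, C p q r * C p q t / (x p * x q)) * A t r := by
    simp only [Finset.mul_sum, Finset.sum_mul]
    -- both sides are sums over `(p, q, r, t)`; the pair `(r, t)` is moved outside
    have : ∀ F : ι → ι → ι → ι → ℝ,
        ∑ p, ∑ q, ∑ r, ∑ t, F p q r t = ∑ r, ∑ t, ∑ p, ∑ q, F p q r t := by
      intro F
      calc ∑ p, ∑ q, ∑ r, ∑ t, F p q r t = ∑ p, ∑ r, ∑ q, ∑ t, F p q r t :=
            Finset.sum_congr rfl fun p _ => Finset.sum_comm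
        _ = ∑ r, ∑ p, ∑ q, ∑ t, F p q r t := Finset.sum_comm
        _ = ∑ r, ∑ p, ∑ t, ∑ q, F p q r t := Finset.sum_congr rfl fun r _ =>
            Finset.sum_congr rfl fun p _ => Finset.sum_comm
        _ = _ := Finset.sum_congr rfl fun r _ => Finset.sum_comm
    rw [this]
    refine Finset.sum_congr rfl fun r _ => Finset.sum_congr rfl fun t _ =>
      Finset.sum_congr rfl fun p _ => Finset.sum_congr rfl fun q _ => ?_
    simp only [div_eq_mul_inv, mul_inv]
    ring
  have e1 : ∑ r, ∑ t, (w r / x r) * (∑ p, ∑ q, C p q r * C p q t / (x p * x q)) * A t r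
      = - ∑ r, ∑ t, (w t / x t) * (∑ p, ∑ q, C p q r * C p q t / (x p * x q)) * A t r := by
    rw [Finset.sum_comm, ← Finset.sum_neg_distrib]
    refine Finset.sum_congr rfl fun r _ => ?_
    rw [← Finset.sum_neg_distrib]
    refine Finset.sum_congr rfl fun t _ => ?_
    rw [hA t r]
    simp only [mul_comm (C _ _ t)]
    ring
  have e2 : ∑ r, ∑ t, (w r / x r - w t / x t)
          * (∑ p, ∑ q, C p q r * C p q t / (x p * x q)) * A t r
      = ∑ r, ∑ t, (w r / x r) * (∑ p, ∑ q, C p q r * C p q t / (x p * x q)) * A t r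
        - ∑ r, ∑ t, (w t / x t) * (∑ p, ∑ q, C p q r * C p q t / (x p * x q)) * A t r := by
    simp only [← Finset.sum_sub_distrib, ← sub_mul]
  have e3 : ∑ p, ∑ q, ∑ r, (w r * C p q r) * (- (∑ t, C p q t * A t r)
        + (∑ t, C p r t * A t q) - (∑ t, C q r t * A t p)) / (x p * x q * x r)
      = ∑ p, ∑ q, ∑ r, (w r * C p q r / (x p * x q * x r)) * (- (∑ t, C p q t * A t r)
        + (∑ t, C p r t * A t q) - (∑ t, C q r t * A t p)) :=
    Finset.sum_congr rfl fun p _ => Finset.sum_congr rfl fun q _ =>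
      Finset.sum_congr rfl fun r _ => by ring
  rw [e3, h, e0, e2]
  linarith

/-- Let `g = g_1 ⊕ … ⊕ g_s` be a real semisimple Lie algebra with
negative-definite Killing form, decomposed into simple ideals, with projections `π i`,
`g_b = -Σ z_i κ_{g_i}(·_i, ·_i)`, a `g_b`-orthonormal basis `{e^i_α}` adapted to the
decomposition (indexed here by the sigma type `Σ i, Fin (d i)`), structure constants
`c_{iα,iβ}^{iγ}`, and the inner product `g` making the basis orthogonal with
`g(e^i_α, e^i_α) = x^i_α > 0`.  Let `Q = y_1 κ_{g_1} + … + y_s κ_{g_s}` and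
`Q̄(X,Y,Z) = Q([X,Y],Z)`.  Then `d̂Q̄ = 0`, and `g(Q̄, d̂α) = 0` for every alternating
2-form `α` iff for every `i` with `y_i ≠ 0` and all `γ, δ` with `x^i_γ ≠ x^i_δ` one has
`Σ_{α,β} c_{iα,iβ}^{iγ} c_{iα,iβ}^{iδ} / (x^i_α x^i_β) = 0`.  In particular `Q̄` is
harmonic for any bi-invariant metric (all `x^i_α` equal within each `g_i`). -/
theorem stmt_2
    {L : Type} [LieRing L] [LieAlgebra ℝ L] [FiniteDimensional ℝ L]
    [LieAlgebra.IsSemisimple ℝ L]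
    (hκneg : ∀ X : L, X ≠ 0 → killingForm ℝ L X X < 0)
    {s : ℕ} (K : Fin s → LieSubalgebra ℝ L)
    (hKideal : ∀ (i : Fin s) (X Y : L), Y ∈ K i → ⁅X, Y⁆ ∈ K i)
    (hKsimple : ∀ i, LieAlgebra.IsSimple ℝ ↥(K i))
    (π : Fin s → (L →ₗ[ℝ] L))
    (hπmem : ∀ i X, π i X ∈ K i)
    (hπsum : ∀ X : L, ∑ i, π i X = X)
    (hπid : ∀ i X, X ∈ K i → π i X = X)
    (hπzero : ∀ i j, i ≠ j → ∀ X, X ∈ K i → π j X = 0)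
    (z : Fin s → ℝ) (hz : ∀ i, 0 < z i)
    (gb : LinearMap.BilinForm ℝ L)
    (hgb : ∀ X Y : L, gb X Y
      = - ∑ i, z i * killingForm ℝ ↥(K i) ⟨π i X, hπmem i X⟩ ⟨π i Y, hπmem i Y⟩)
    {d : Fin s → ℕ}
    (E : (Σ i : Fin s, Fin (d i)) → L)
    (hEmem : ∀ p : Σ i : Fin s, Fin (d i), E p ∈ K p.1)
    (hEon : ∀ p q, gb (E p) (E q) = if p = q then 1 else 0)
    (hEspan : Submodule.span ℝ (Set.range E) = ⊤)
    (x : (Σ i : Fin s, Fin (d i)) → ℝ) (hx : ∀ p, 0 < x p)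
    (c : (i : Fin s) → Fin (d i) → Fin (d i) → Fin (d i) → ℝ)
    (hc : ∀ i a b g', c i a b g' = gb ⁅E ⟨i, a⟩, E ⟨i, b⟩⁆ (E ⟨i, g'⟩))
    (y : Fin s → ℝ)
    (Q : L → L → ℝ)
    (hQ : ∀ X Y : L, Q X Y
      = ∑ i, y i * killingForm ℝ ↥(K i) ⟨π i X, hπmem i X⟩ ⟨π i Y, hπmem i Y⟩)
    (Qbar : L → L → L → ℝ)
    (hQbar : ∀ X Y Z : L, Qbar X Y Z = Q ⁅X, Y⁆ Z) :
    -- (1) Q̄ is closed: d̂Q̄ = 0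
    (∀ X₁ X₂ X₃ X₄ : L,
      - Qbar ⁅X₁, X₂⁆ X₃ X₄ + Qbar ⁅X₁, X₃⁆ X₂ X₄ - Qbar ⁅X₁, X₄⁆ X₂ X₃
        - Qbar ⁅X₂, X₃⁆ X₁ X₄ + Qbar ⁅X₂, X₄⁆ X₁ X₃ - Qbar ⁅X₃, X₄⁆ X₁ X₂ = 0)
    ∧
    -- (2) g-coclosedness of Q̄ is equivalent to the structure-constant conditions
    ((∀ α : L [⋀^Fin 2]→ₗ[ℝ] ℝ,
        ∑ p, ∑ q, ∑ r,
          Qbar (E p) (E q) (E r)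
            * (- α ![⁅E p, E q⁆, E r] + α ![⁅E p, E r⁆, E q] - α ![⁅E q, E r⁆, E p])
            / (x p * x q * x r) = 0)
      ↔ (∀ i : Fin s, y i ≠ 0 → ∀ γ δ : Fin (d i), x ⟨i, γ⟩ ≠ x ⟨i, δ⟩ →
          ∑ a : Fin (d i), ∑ b : Fin (d i),
            c i a b γ * c i a b δ / (x ⟨i, a⟩ * x ⟨i, b⟩) = 0))
    ∧
    -- (3) in particular, Q̄ is harmonic for any bi-invariant metric
    ((∀ (i : Fin s) (a b : Fin (d i)), x ⟨i, a⟩ = x ⟨i, b⟩) →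
      ∀ α : L [⋀^Fin 2]→ₗ[ℝ] ℝ,
        ∑ p, ∑ q, ∑ r,
          Qbar (E p) (E q) (E r)
            * (- α ![⁅E p, E q⁆, E r] + α ![⁅E p, E r⁆, E q] - α ![⁅E q, E r⁆, E p])
            / (x p * x q * x r) = 0) := by
  have hgbW : ∀ X Y, gb X Y = weightedForm hπmem (fun i => - z i) X Y := by
    intro X Y
    rw [hgb, weightedForm, ← Finset.sum_neg_distrib]
    exact Finset.sum_congr rfl fun i _ => (neg_mul _ _).symm
  have hQW : ∀ X Y, Q X Y = weightedForm hπmem y X Y := hQ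
  set C : (Σ i, Fin (d i)) → (Σ i, Fin (d i)) → (Σ i, Fin (d i)) → ℝ :=
    fun p q r => gb ⁅E p, E q⁆ (E r) with hC
  have hgbi : ∀ X Y Z, gb ⁅X, Y⁆ Z = gb X ⁅Y, Z⁆ := fun X Y Z => by
    rw [hgbW, hgbW, weightedForm_lie hKideal hπmem hπsum hπid hπzero]
  have h12 : ∀ p q r, C q p r = - C p q r := fun p q r => by
    simp only [hC]
    rw [← lie_skew, map_neg, LinearMap.neg_apply]
  have h23 : ∀ p q r, C p r q = - C p q r := fun p q r => by
    simp only [hC]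
    rw [hgbi, ← lie_skew, map_neg, ← hgbi]
  have hC12 : ∀ p q r, p.1 ≠ q.1 → C p q r = 0 := fun p q r h => by
    simp only [hC]
    rw [lie_eq_zero_of_ne hKideal hπid hπzero h (hEmem p) (hEmem q), map_zero,
      LinearMap.zero_apply]
  have hC23 : ∀ p q r, q.1 ≠ r.1 → C p q r = 0 := fun p q r h => by
    simp only [hC]
    rw [hgbi, lie_eq_zero_of_ne hKideal hπid hπzero h (hEmem q) (hEmem r), map_zero]
  set w : (Σ i, Fin (d i)) → ℝ := fun p => - (y p.1 / z p.1) with hwdef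
  have hQb : ∀ p q r, Qbar (E p) (E q) (E r) = w r * C p q r := fun p q r => by
    have hz' := (hz r.1).ne'
    simp only [hC, hwdef]
    rw [hQbar, hQW, hgbW, weightedForm_of_mem hπmem hπzero _ r.1 _ _ (hEmem r),
      weightedForm_of_mem hπmem hπzero _ r.1 _ _ (hEmem r)]
    field_simp
  have hexp : ∀ v, ∑ t, gb v (E t) • E t = v := by
    intro v
    have : (∑ t, (gb.flip (E t)).smulRight (E t) : L →ₗ[ℝ] L) = LinearMap.id := by
      refine LinearMap.ext_on_range hEspan fun p => ?_
      simp [LinearMap.sum_apply, hEon]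
    simpa [LinearMap.sum_apply] using congrArg (fun f => f v) this
  have hαexp : ∀ (α : L [⋀^Fin 2]→ₗ[ℝ] ℝ) p q r,
      α ![⁅E p, E q⁆, E r] = ∑ t, C p q t * α ![E t, E r] := by
    intro α p q r
    let l : L →ₗ[ℝ] ℝ :=
      { toFun := fun v => α ![v, E r]
        map_add' := fun u v => α.map_vecCons_add ![E r] u v
        map_smul' := fun a v => α.map_vecCons_smul ![E r] a v }
    change l ⁅E p, E q⁆ = ∑ t, C p q t * l (E t)
    conv_lhs => rw [← hexp ⁅E p, E q⁆]
    simp [hC]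
  have hpair : ∀ α : L [⋀^Fin 2]→ₗ[ℝ] ℝ,
      ∑ p, ∑ q, ∑ r,
          Qbar (E p) (E q) (E r)
            * (- α ![⁅E p, E q⁆, E r] + α ![⁅E p, E r⁆, E q] - α ![⁅E q, E r⁆, E p])
            / (x p * x q * x r)
      = -(3 / 2) * ∑ r, ∑ t, (w r / x r - w t / x t)
          * (∑ p, ∑ q, C p q r * C p q t / (x p * x q)) * α ![E t, E r] := by
    intro α
    simp only [hQb, hαexp]
    refine pairing_eq C w x (fun t r => α ![E t, E r]) h12 h23 (fun p q r => ?_) (fun t r => ?_)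
    · by_cases h : q.1 = r.1
      · simp only [hwdef, h]
      · rw [hC23 p q r h, mul_zero, mul_zero]
    · have := α.map_swap ![E t, E r] (i := 0) (j := 1) (by simp)
      rw [← this]
      congr 1
      ext i
      fin_cases i <;> simp
  have hM : ∀ (i : Fin s) (γ δ : Fin (d i)),
      ∑ p, ∑ q, C p q ⟨i, γ⟩ * C p q ⟨i, δ⟩ / (x p * x q)
        = ∑ a : Fin (d i), ∑ b : Fin (d i),
            c i a b γ * c i a b δ / (x ⟨i, a⟩ * x ⟨i, b⟩) := by
    intro i γ δ
    have hq : ∀ p, ∑ q, C p q ⟨i, γ⟩ * C p q ⟨i, δ⟩ / (x p * x q)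
        = ∑ b : Fin (d i), C p ⟨i, b⟩ ⟨i, γ⟩ * C p ⟨i, b⟩ ⟨i, δ⟩ / (x p * x ⟨i, b⟩) := by
      intro p
      rw [Fintype.sum_sigma, Finset.sum_eq_single i _ (by simp)]
      intro j _ hj
      refine Finset.sum_eq_zero fun b _ => ?_
      rw [hC23 p ⟨j, b⟩ ⟨i, γ⟩ hj, zero_mul, zero_div]
    simp only [hq]
    rw [Fintype.sum_sigma, Finset.sum_eq_single i _ (by simp)]
    · simp only [hc, hC]
    · intro j _ hj
      refine Finset.sum_eq_zero fun a _ => Finset.sum_eq_zero fun b _ => ?_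
      rw [hC12 ⟨j, a⟩ ⟨i, b⟩ ⟨i, γ⟩ hj, zero_mul, zero_div]
  have hM0 : ∀ r t : Σ i, Fin (d i), r.1 ≠ t.1 →
      ∑ p, ∑ q, C p q r * C p q t / (x p * x q) = 0 := by
    intro r t hrt
    refine Finset.sum_eq_zero fun p _ => Finset.sum_eq_zero fun q _ => ?_
    by_cases h : q.1 = r.1
    · rw [hC23 p q t (h ▸ hrt), mul_zero, zero_div]
    · rw [hC23 p q r h, zero_mul, zero_div]
  have main : (∀ α : L [⋀^Fin 2]→ₗ[ℝ] ℝ,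
        ∑ p, ∑ q, ∑ r,
          Qbar (E p) (E q) (E r)
            * (- α ![⁅E p, E q⁆, E r] + α ![⁅E p, E r⁆, E q] - α ![⁅E q, E r⁆, E p])
            / (x p * x q * x r) = 0)
      ↔ (∀ i : Fin s, y i ≠ 0 → ∀ γ δ : Fin (d i), x ⟨i, γ⟩ ≠ x ⟨i, δ⟩ →
          ∑ a : Fin (d i), ∑ b : Fin (d i),
            c i a b γ * c i a b δ / (x ⟨i, a⟩ * x ⟨i, b⟩) = 0) := by
    simp only [hpair]
    constructor
    · intro H i hy γ δ hne
      rw [← hM]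
      -- the elementary 2-form `e^δ ∧ e^γ` isolates the coefficient at `(γ, δ)`
      let α : L [⋀^Fin 2]→ₗ[ℝ] ℝ :=
        (Matrix.detRowAlternating : (Fin 2 → ℝ) [⋀^Fin 2]→ₗ[ℝ] ℝ).compLinearMap
          (LinearMap.pi ![gb.flip (E ⟨i, δ⟩), gb.flip (E ⟨i, γ⟩)])
      have hα : ∀ t r, α ![E t, E r]
          = (if t = ⟨i, δ⟩ then 1 else 0) * (if r = ⟨i, γ⟩ then 1 else 0)
            - (if t = ⟨i, γ⟩ then 1 else 0) * (if r = ⟨i, δ⟩ then 1 else 0) := by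
        intro t r
        have : α ![E t, E r] = Matrix.det (Matrix.of fun a => LinearMap.pi
          ![gb.flip (E ⟨i, δ⟩), gb.flip (E ⟨i, γ⟩)] ((![E t, E r] : Fin 2 → L) a)) := rfl
        rw [this, Matrix.det_fin_two]
        simp only [Matrix.of_apply, LinearMap.pi_apply, Matrix.cons_val_zero, Matrix.cons_val_one,
          LinearMap.BilinForm.flip_apply, hEon]
      have h := H α
      simp only [hα, mul_sub, Finset.sum_sub_distrib] at h
      simp only [mul_ite, mul_one, mul_zero, Finset.sum_ite_eq',
        Finset.sum_ite_irrel, Finset.mem_univ, if_true, Finset.sum_const_zero] at h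
      have hsym : ∑ p, ∑ q, C p q ⟨i, δ⟩ * C p q ⟨i, γ⟩ / (x p * x q)
          = ∑ p, ∑ q, C p q ⟨i, γ⟩ * C p q ⟨i, δ⟩ / (x p * x q) := by
        simp only [mul_comm (C _ _ ⟨i, δ⟩)]
      rw [hsym] at h
      have h' : (w ⟨i, γ⟩ / x ⟨i, γ⟩ - w ⟨i, δ⟩ / x ⟨i, δ⟩)
          * (∑ p, ∑ q, C p q ⟨i, γ⟩ * C p q ⟨i, δ⟩ / (x p * x q)) = 0 := by linarith
      refine (mul_eq_zero.mp h').resolve_left fun h0 => hne ?_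
      have hw0 : y i / z i ≠ 0 := div_ne_zero hy (hz i).ne'
      simp only [hwdef] at h0
      have h1 := (hx ⟨i, γ⟩).ne'
      have h2 := (hx ⟨i, δ⟩).ne'
      rw [sub_eq_zero, div_eq_div_iff h1 h2] at h0
      exact (mul_left_cancel₀ (neg_ne_zero.mpr hw0) h0).symm
    · intro H α
      have : ∀ r t, (w r / x r - w t / x t)
          * (∑ p, ∑ q, C p q r * C p q t / (x p * x q)) = 0 := by
        rintro ⟨i, γ⟩ ⟨j, δ⟩
        by_cases hij : i = j
        · subst hij
          by_cases hxe : x ⟨i, γ⟩ = x ⟨i, δ⟩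
          · simp only [hwdef, hxe, sub_self, zero_mul]
          by_cases hy : y i = 0
          · simp [hwdef, hy]
          · rw [hM, H i hy γ δ hxe, mul_zero]
        · rw [hM0 _ _ hij, mul_zero]
      simp only [this, zero_mul, Finset.sum_const_zero, mul_zero]
  refine ⟨fun X₁ X₂ X₃ X₄ => ?_, main, fun hxe => main.mpr fun i _ γ δ h => absurd (hxe i γ δ) h⟩
  simp only [hQbar]
  exact closed_of_invariant Q (fun X Y => by rw [hQW, hQW, weightedForm_symm])
    (fun X Y Z => by rw [hQW, hQW, hQW, weightedForm_add_right])
    (fun X Y Z => by rw [hQW, hQW, weightedForm_lie hKideal hπmem hπsum hπid hπzero])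
    X₁ X₂ X₃ X₄
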